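/- arXiv:1204.1939 — 2 statements merged into one kernel-verified Lean document; each statement's English description precedes it below -/
import Mathlib

section
/- Let G be a connected graph on n vertices, and consider any weighted random walk on G: the Markov chain that, given positive weights w(e) on the edges, moves from u to a neighbour v with probability w(u,v)/w(u), where w(u)=Σ_{x:{u,x}∈E} w(u,x). Then the vertex cover time of this walk satisfies C_G ≥ (n/4)·log(n/2). -/
open scoped ENNReal Classical

-- Probability of the length-`t` trajectory `f 0, f 1, …, f t` for the Markov chain with
-- transition probabilities `P`, started at `u`.
noncomputable def chainTrajProb {V : Type*} [Fintype V] (P : V → V → ℝ) (u : V) {t : ℕ}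
    (f : Fin (t + 1) → V) : ℝ :=
  (if f 0 = u then (1 : ℝ) else 0) * ∏ i : Fin t, P (f i.castSucc) (f i.succ)

-- `chainUncov P u t` : the probability that the chain started at `u` has NOT visited every
-- state by time `t`.
noncomputable def chainUncov {V : Type*} [Fintype V] (P : V → V → ℝ) (u : V) (t : ℕ) : ℝ :=
  ∑ f : Fin (t + 1) → V, if ∀ x : V, ∃ i, f i = x then 0 else chainTrajProb P u f

-- Expected vertex cover time of the chain started at `u`, as `∑_{t ≥ 0} Pr(cover time > t)`.
noncomputable def chainCoverTime {V : Type*} [Fintype V] (P : V → V → ℝ) (u : V) : ℝ≥0∞ :=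
  ∑' t : ℕ, ENNReal.ofReal (chainUncov P u t)


section Helpers

variable {V : Type*} [Fintype V] [DecidableEq V]

/-- Abstract setting: irreducible stochastic reversible chain. -/
structure RevChain (G : SimpleGraph V) (P : V → V → ℝ) (p : V → ℝ) : Prop where
  conn : G.Connected
  nonneg : ∀ a b, 0 ≤ P a b
  adj_pos : ∀ a b, G.Adj a b → 0 < P a b
  row : ∀ a, ∑ b, P a b = 1
  p_pos : ∀ a, 0 < p a
  p_sum : ∑ a, p a = 1
  rev : ∀ a b, p a * P a b = p b * P b a

variable {G : SimpleGraph V} {P : V → V → ℝ} {p : V → ℝ}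

/-- Minimum principle. -/
lemma RevChain.min_principle (h : RevChain G P p) (S : Finset V) (hS : S.Nonempty)
    (f : V → ℝ) (c : ℝ) (hb : ∀ x ∈ S, c ≤ f x)
    (hf : ∀ x, x ∉ S → ∑ y, P x y * f y ≤ f x) (x : V) : c ≤ f x := by
  haveI : Nonempty V := ⟨x⟩
  obtain ⟨x0, hx0⟩ := Finite.exists_min f
  refine le_trans ?_ (hx0 x)
  by_contra hlt
  push Not at hlt
  have key : ∀ a b, G.Adj a b → f a = f x0 → f b = f x0 := by
    intro a b hab ha
    have haS : a ∉ S := fun haS => by linarith [hb a haS]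
    have h1 := hf a haS
    have h2 : ∑ y, P a y * (f y - f x0) ≤ 0 := by
      simp only [mul_sub, Finset.sum_sub_distrib, ← Finset.sum_mul, h.row]
      linarith
    have h3 : ∀ y ∈ Finset.univ, 0 ≤ P a y * (f y - f x0) :=
      fun y _ => mul_nonneg (h.nonneg a y) (by linarith [hx0 y])
    have h4 := (Finset.sum_eq_zero_iff_of_nonneg h3).1 (le_antisymm h2 (Finset.sum_nonneg h3))
      b (Finset.mem_univ b)
    have := h.adj_pos a b hab
    rcases mul_eq_zero.1 h4 with h5 | h5 <;> linarith
  obtain ⟨s, hs⟩ := hS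
  have walk : ∀ a b, G.Walk a b → f a = f x0 → f b = f x0 := by
    intro a b q
    induction q with
    | nil => exact id
    | cons hab _ ih => exact fun ha => ih (key _ _ hab ha)
  obtain ⟨q⟩ := h.conn.preconnected x0 s
  have := walk _ _ q rfl
  linarith [hb s hs]

/-- Solvability of the Dirichlet problem. -/
lemma RevChain.dirichlet (h : RevChain G P p) (S : Finset V) (hS : S.Nonempty) (b : V → ℝ) :
    ∃ f : V → ℝ, (∀ x ∈ S, f x = b x) ∧ ∀ x, x ∉ S → f x = 1 + ∑ y, P x y * f y := by
  let T : (V → ℝ) →ₗ[ℝ] (V → ℝ) :=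
    { toFun := fun f x => if x ∈ S then f x else f x - ∑ y, P x y * f y
      map_add' := by
        intro f g; ext x
        by_cases hx : x ∈ S
        · simp [hx]
        · simp [hx, mul_add, Finset.sum_add_distrib]; ring
      map_smul' := by
        intro c f; ext x
        by_cases hx : x ∈ S
        · simp [hx]
        · simp [hx, mul_sub, Finset.mul_sum, mul_left_comm] }
  have hT : ∀ f x, T f x = if x ∈ S then f x else f x - ∑ y, P x y * f y := fun _ _ => rfl
  have inj : Function.Injective T := by
    rw [injective_iff_map_eq_zero]
    intro f hf
    have h1 : ∀ x ∈ S, f x = 0 := by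
      intro x hx
      have := congrFun hf x
      simpa [hT, hx] using this
    have h2 : ∀ x, x ∉ S → f x - ∑ y, P x y * f y = 0 := by
      intro x hx
      have := congrFun hf x
      simpa [hT, hx] using this
    ext x
    apply le_antisymm
    · have := h.min_principle S hS (fun x => - f x) 0 (fun x hx => by simp [h1 x hx])
        (fun x hx => by simp only [mul_neg, Finset.sum_neg_distrib]; linarith [h2 x hx]) x
      simpa using this
    · exact h.min_principle S hS f 0 (fun x hx => by simp [h1 x hx])
        (fun x hx => by linarith [h2 x hx]) x
  have surj : Function.Surjective T := LinearMap.injective_iff_surjective.1 inj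
  obtain ⟨f, hf⟩ := surj (fun x => if x ∈ S then b x else 1)
  refine ⟨f, fun x hx => ?_, fun x hx => ?_⟩
  · have := congrFun hf x
    simpa [hT, hx] using this
  · have := congrFun hf x
    simp only [hT, hx, if_false] at this
    linarith

/-- Hitting times exist, with the potential function. -/
lemma RevChain.hitting (h : RevChain G P p) :
    ∃ (H : V → V → ℝ) (φ : V → ℝ),
      (∀ y, H y y = 0) ∧ (∀ x y, x ≠ y → H x y = 1 + ∑ z, P x z * H z y) ∧
      (∀ x y, x ≠ y → 1 / (2 * p y) ≤ H x y + φ x / 2 - φ y / 2) := by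
  choose H' hH0 hH1 using fun y : V => h.dirichlet {y} ⟨y, by simp⟩ (fun _ => 0)
  have hH0 : ∀ y, H' y y = 0 := fun y => hH0 y y (by simp)
  have hH1 : ∀ y x, x ≠ y → H' y x = 1 + ∑ z, P x z * H' y z :=
    fun y x hx => hH1 y x (by simpa using hx)
  -- symmetry of the form
  have symm : ∀ f g : V → ℝ, ∑ x, p x * (f x * ∑ z, P x z * g z)
      = ∑ x, p x * (g x * ∑ z, P x z * f z) := by
    intro f g
    simp only [Finset.mul_sum]
    rw [Finset.sum_comm]
    refine Finset.sum_congr rfl fun x _ => Finset.sum_congr rfl fun z _ => ?_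
    have := h.rev x z
    calc p z * (f z * (P z x * g x)) = (p z * P z x) * (f z * g x) := by ring
      _ = _ := by rw [← this]; ring
  -- the value of the Laplacian at the target
  have lap : ∀ f : V → ℝ, ∀ y, ∑ x, p x * (f x * (H' y x - ∑ z, P x z * H' y z))
      = ∑ x, p x * f x + p y * f y * ((H' y y - ∑ z, P y z * H' y z) - 1) := by
    intro f y
    rw [← Finset.add_sum_erase _ _ (Finset.mem_univ y),
      ← Finset.add_sum_erase _ (fun x => p x * f x) (Finset.mem_univ y)]
    have : ∑ x ∈ Finset.univ.erase y, p x * (f x * (H' y x - ∑ z, P x z * H' y z))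
        = ∑ x ∈ Finset.univ.erase y, p x * f x := by
      refine Finset.sum_congr rfl fun x hx => ?_
      rw [hH1 y x (Finset.ne_of_mem_erase hx)]
      ring
    rw [this]; ring
  have ret : ∀ y, p y * ((H' y y - ∑ z, P y z * H' y z) - 1) = -1 := by
    intro y
    have h1 := lap (fun _ => 1) y
    have h2 := symm (fun _ => 1) (H' y)
    simp only [one_mul, mul_one, mul_sub, Finset.sum_sub_distrib, h.row, h.p_sum] at h1 h2
    linarith
  have lap' : ∀ f : V → ℝ, ∀ y, ∑ x, p x * (f x * (H' y x - ∑ z, P x z * H' y z))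
      = ∑ x, p x * f x - f y := by
    intro f y
    rw [lap f y]
    have := ret y
    linear_combination f y * this
  have cyc : ∀ x y, H' y x - H' x y = (∑ z, p z * H' y z) - ∑ z, p z * H' x z := by
    intro x y
    have h1 := lap' (H' x) y
    have h2 := lap' (H' y) x
    have h3 := symm (H' x) (H' y)
    have h4 : ∑ z, p z * (H' x z * H' y z) = ∑ z, p z * (H' y z * H' x z) :=
      Finset.sum_congr rfl fun z _ => by ring
    simp only [mul_sub, Finset.sum_sub_distrib] at h1 h2
    linarith
  have comm : ∀ x y, x ≠ y → 1 / p y ≤ H' y x + H' x y := by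
    intro x y hxy
    have hp := h.p_pos y
    have hret : (H' y y - ∑ z, P y z * H' y z) = 1 - 1 / p y := by
      have := ret y
      field_simp
      linarith
    have hsum : ∀ z, ∑ t, P z t * (H' x t + H' y x - H' y t)
        = ∑ t, P z t * H' x t + H' y x - ∑ t, P z t * H' y t := by
      intro z
      simp only [mul_sub, mul_add, Finset.sum_sub_distrib, Finset.sum_add_distrib,
        ← Finset.sum_mul, h.row, one_mul]
    have g0 : ∀ z, 0 ≤ H' x z + H' y x - H' y z := by
      refine h.min_principle {x} ⟨x, by simp⟩ (fun z => H' x z + H' y x - H' y z) 0 ?_ ?_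
      · intro z hz
        rw [Finset.mem_singleton] at hz
        subst hz
        simp [hH0]
      · intro z hz
        rw [Finset.mem_singleton] at hz
        simp only [hsum]
        have h1 := hH1 x z hz
        by_cases hzy : z = y
        · subst hzy
          have : 0 < 1 / p z := by positivity
          linarith
        · have h2 := hH1 y z hzy
          linarith
    have h1 := hH1 x y (Ne.symm hxy)
    have h2 := hsum y
    have h3 : 0 ≤ ∑ t, P y t * (H' x t + H' y x - H' y t) :=
      Finset.sum_nonneg fun t _ => mul_nonneg (h.nonneg _ _) (g0 t)
    have h4 := hH0 y
    linarith
  refine ⟨fun x y => H' y x, fun y => ∑ z, p z * H' y z, hH0, fun x y => hH1 y x, ?_⟩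
  intro x y hxy
  have h1 := comm x y hxy
  have h2 := cyc x y
  have h3 : 1 / (2 * p y) = (1 / p y) / 2 := by
    have := h.p_pos y
    field_simp
  simp only
  linarith

/-- Family of solutions of the cover-time recursion with terminal value `b`. -/
lemma RevChain.exists_family (h : RevChain G P p) (b : V → ℝ) :
    ∃ F : Finset V → V → ℝ, (∀ x, F ∅ x = b x) ∧
      (∀ S, ∀ x ∈ S, F S x = F (S.erase x) x) ∧
      (∀ S : Finset V, S.Nonempty → ∀ x, x ∉ S → F S x = 1 + ∑ y, P x y * F S y) := by
  choose D hD0 hD1 using h.dirichlet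
  let step : (S : Finset V) → ((T : Finset V) → T ⊂ S → V → ℝ) → V → ℝ := fun S rec =>
    if hS : S.Nonempty then
      D S hS (fun x => if hx : x ∈ S then rec (S.erase x) (Finset.erase_ssubset hx) x else 0)
    else b
  let F : Finset V → V → ℝ := fun S => Finset.strongInduction (p := fun _ => V → ℝ) step S
  have hF : ∀ S, F S = step S (fun T _ => F T) := fun S => Finset.strongInduction_eq _ _
  refine ⟨F, ?_, ?_, ?_⟩
  · intro x
    rw [hF]
    simp [step]
  · intro S x hx
    have hS : S.Nonempty := ⟨x, hx⟩
    rw [hF]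
    simp only [step, hS, dif_pos]
    rw [hD0 S hS _ x hx]
    simp [hx]
  · intro S hS x hx
    rw [hF]
    simp only [step, hS, dif_pos]
    exact hD1 S hS _ x hx

/-- The Matthews-type step. -/
lemma RevChain.removal (h : RevChain G P p) (A : Finset V) (K : ℝ) (φ : V → ℝ) (H : V → V → ℝ)
    (hH0 : ∀ y, H y y = 0) (hH1 : ∀ x y, x ≠ y → H x y = 1 + ∑ z, P x z * H z y)
    (hK : ∀ x, ∀ y ∈ A, x ≠ y → K ≤ H x y + φ x / 2 - φ y / 2)
    (F : Finset V → V → ℝ) (hF0 : ∀ x, F ∅ x = - φ x / 2)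
    (hF1 : ∀ S, ∀ x ∈ S, F S x = F (S.erase x) x)
    (hF2 : ∀ S : Finset V, S.Nonempty → ∀ x, x ∉ S → F S x = 1 + ∑ y, P x y * F S y) :
    ∀ S : Finset V, S ⊆ A → S.Nonempty → ∀ x, x ∉ S →
      K ≤ S.card * F S x - ∑ y ∈ S, F (S.erase y) x := by
  intro S
  induction S using Finset.strongInduction with
  | H S ih =>
    intro hSA hS x hx
    by_cases h1 : ∃ y, S = {y}
    · obtain ⟨y, rfl⟩ := h1
      have hxy : x ≠ y := by simpa using hx
      have hyA : y ∈ A := hSA (by simp)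
      have e1 : ∀ z, 0 ≤ F {y} z - (H z y - φ y / 2) := by
        refine h.min_principle {y} ⟨y, by simp⟩ _ 0 ?_ ?_
        · intro z hz
          have hzy : z = y := by simpa using hz
          subst hzy
          rw [hF1 {z} z (by simp)]
          simp [hF0, hH0]
          linarith
        · intro z hz
          have hzy : z ≠ y := by simpa using hz
          have a1 := hF2 {y} ⟨y, by simp⟩ z hz
          have a2 := hH1 z y hzy
          simp only [mul_sub, Finset.sum_sub_distrib, ← Finset.sum_mul, h.row, one_mul]
          linarith
      have := hK x y hyA hxy
      have e2 := e1 x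
      simp [hF0]
      linarith
    · have hne : ∀ y ∈ S, (S.erase y).Nonempty := by
        intro y hy
        rw [Finset.nonempty_iff_ne_empty]
        intro he
        exact h1 ⟨y, by
          rw [← Finset.insert_erase hy, he]
          rfl⟩
      refine h.min_principle S hS
        (fun x => S.card * F S x - ∑ y ∈ S, F (S.erase y) x) K ?_ ?_ x
      · intro z hz
        have a1 := ih (S.erase z) (Finset.erase_ssubset hz)
          ((Finset.erase_subset _ _).trans hSA) (hne z hz) z (by simp)
        have a2 : ∑ y ∈ S, F (S.erase y) z
            = F (S.erase z) z + ∑ y ∈ S.erase z, F ((S.erase z).erase y) z := by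
          rw [← Finset.add_sum_erase _ _ hz]
          congr 1
          refine Finset.sum_congr rfl fun y hy => ?_
          have hyz := Finset.ne_of_mem_erase hy
          rw [hF1 (S.erase y) z (Finset.mem_erase.2 ⟨Ne.symm hyz, hz⟩), Finset.erase_right_comm]
        have a3 : ((S.erase z).card : ℝ) = S.card - 1 := by
          rw [Finset.cast_card_erase_of_mem hz]
        rw [a3] at a1
        rw [a2, hF1 S z hz]
        linarith
      · intro z hz
        have a1 := hF2 S hS z hz
        have a2 : ∀ y ∈ S, F (S.erase y) z = 1 + ∑ t, P z t * F (S.erase y) t := fun y hy =>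
          hF2 (S.erase y) (hne y hy) z (fun hc => hz (Finset.mem_of_mem_erase hc))
        simp only [mul_sub, Finset.sum_sub_distrib, Finset.mul_sum]
        rw [Finset.sum_comm, Finset.sum_congr rfl a2, Finset.sum_add_distrib, a1]
        simp only [Finset.sum_const, nsmul_eq_mul, mul_add, Finset.mul_sum]
        apply le_of_eq
        have : ∀ t, P z t * ((S.card : ℝ) * F S t) = S.card * (P z t * F S t) :=
          fun t => by ring
        simp only [this]
        ring

lemma RevChain.family_lower (F : Finset V → V → ℝ) (A : Finset V) (K : ℝ) (φ : V → ℝ)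
    (hF0 : ∀ x, F ∅ x = - φ x / 2)
    (hrem : ∀ S : Finset V, S ⊆ A → S.Nonempty → ∀ x, x ∉ S →
      K ≤ S.card * F S x - ∑ y ∈ S, F (S.erase y) x) :
    ∀ k : ℕ, ∀ S : Finset V, S.card = k → S ⊆ A → ∀ x, x ∉ S →
      K * (harmonic k : ℝ) - φ x / 2 ≤ F S x := by
  intro k
  induction k with
  | zero =>
    intro S hS _ x _
    rw [Finset.card_eq_zero] at hS
    subst hS
    simp [hF0]
    linarith
  | succ k ih =>
    intro S hS hSA x hx
    have hne : S.Nonempty := Finset.card_pos.1 (by omega)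
    have h1 := hrem S hSA hne x hx
    have h2 : ∑ y ∈ S, (K * (harmonic k : ℝ) - φ x / 2) ≤ ∑ y ∈ S, F (S.erase y) x := by
      refine Finset.sum_le_sum fun y hy => ?_
      exact ih (S.erase y) (by rw [Finset.card_erase_of_mem hy]; omega)
        ((Finset.erase_subset _ _).trans hSA) x (fun hc => hx (Finset.mem_of_mem_erase hc))
    rw [Finset.sum_const, nsmul_eq_mul] at h2
    have h3 : (S.card : ℝ) = k + 1 := by rw [hS]; push_cast; ring
    rw [h3] at h1 h2
    have hk : (0 : ℝ) < (k : ℝ) + 1 := by positivity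
    rw [harmonic_succ]
    push_cast
    have h4 : ((k : ℝ) + 1) * (K * ((harmonic k : ℝ) + ((k : ℝ) + 1)⁻¹) - φ x / 2)
        ≤ ((k : ℝ) + 1) * F S x := by
      have : ((k : ℝ) + 1) * (K * ((harmonic k : ℝ) + ((k : ℝ) + 1)⁻¹) - φ x / 2)
          = ((k : ℝ) + 1) * (K * (harmonic k : ℝ) - φ x / 2) + K := by
        field_simp
        ring
      linarith
    exact le_of_mul_le_mul_left h4 hk

/-- Probability that some element of `S` is unvisited at time `t`. -/
noncomputable def uncS (P : V → V → ℝ) (S : Finset V) (u : V) (t : ℕ) : ℝ :=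
  ∑ f : Fin (t + 1) → V, if ∀ x ∈ S, ∃ i, f i = x then 0 else chainTrajProb P u f

lemma chainTrajProb_nonneg (hP : ∀ a b, 0 ≤ P a b) (u : V) {t : ℕ} (f : Fin (t + 1) → V) :
    0 ≤ chainTrajProb P u f := by
  unfold chainTrajProb
  refine mul_nonneg ?_ (Finset.prod_nonneg fun i _ => hP _ _)
  split_ifs <;> norm_num

lemma uncS_nonneg (hP : ∀ a b, 0 ≤ P a b) (S : Finset V) (u : V) (t : ℕ) :
    0 ≤ uncS P S u t := by
  refine Finset.sum_nonneg fun f _ => ?_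
  split_ifs
  · exact le_rfl
  · exact chainTrajProb_nonneg hP u f

lemma uncS_le (hP : ∀ a b, 0 ≤ P a b) (S : Finset V) (u : V) (t : ℕ) :
    uncS P S u t ≤ chainUncov P u t := by
  refine Finset.sum_le_sum fun f _ => ?_
  by_cases h1 : ∀ x : V, ∃ i, f i = x
  · rw [if_pos h1, if_pos (fun x _ => h1 x)]
  · rw [if_neg h1]
    split_ifs
    · exact chainTrajProb_nonneg hP u f
    · exact le_rfl

lemma uncS_zero (S : Finset V) (hS : S.Nonempty) (x : V) (hx : x ∉ S) : uncS P S x 0 = 1 := by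
  unfold uncS
  rw [Finset.sum_eq_single (fun _ => x)]
  · rw [if_neg]
    · simp [chainTrajProb]
    · intro hc
      obtain ⟨s, hs⟩ := hS
      obtain ⟨i, hi⟩ := hc s hs
      have hi : x = s := hi
      exact hx (by rw [hi]; exact hs)
  · intro f _ hf
    have : f 0 ≠ x := by
      intro h0
      apply hf
      funext i
      have hi : i = 0 := Fin.ext (by have := i.isLt; simp)
      rw [hi, h0]
    split_ifs
    · rfl
    · simp [chainTrajProb, this]
  · simp

lemma uncS_succ (S : Finset V) (x : V) (hx : x ∉ S) (t : ℕ) :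
    uncS P S x (t + 1) = ∑ y, P x y * uncS P (S.erase y) y t := by
  unfold uncS
  rw [← (Fin.consEquiv (fun _ : Fin (t + 1 + 1) => V)).sum_comp, Fintype.sum_prod_type,
    Finset.sum_eq_single x]
  · simp only [Finset.mul_sum]
    rw [Finset.sum_comm]
    refine Finset.sum_congr rfl fun g _ => ?_
    rw [Finset.sum_eq_single (g 0)]
    · have hiff : (∀ z ∈ S, ∃ i, (Fin.consEquiv (fun _ : Fin (t + 1 + 1) => V)) (x, g) i = z) ↔
          ∀ z ∈ S.erase (g 0), ∃ i, g i = z := by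
        constructor
        · intro hc z hz
          have hzS := Finset.mem_of_mem_erase hz
          obtain ⟨i, hi⟩ := hc z hzS
          induction i using Fin.cases with
          | zero =>
            simp [Fin.consEquiv] at hi
            exact absurd (hi ▸ hzS) hx
          | succ j => exact ⟨j, by simpa [Fin.consEquiv] using hi⟩
        · intro hc z hz
          by_cases hzg : z = g 0
          · exact ⟨Fin.succ 0, by simp [Fin.consEquiv, hzg]⟩
          · obtain ⟨i, hi⟩ := hc z (Finset.mem_erase.2 ⟨hzg, hz⟩)
            exact ⟨i.succ, by simpa [Fin.consEquiv] using hi⟩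
      by_cases hh : ∀ z ∈ S.erase (g 0), ∃ i, g i = z
      · rw [if_pos (hiff.2 hh), if_pos hh, mul_zero]
      · rw [if_neg (fun hc => hh (hiff.1 hc)), if_neg hh]
        simp only [chainTrajProb, Fin.consEquiv]
        rw [Fin.prod_univ_succ]
        simp
    · intro y _ hy
      split_ifs
      · simp
      · simp [chainTrajProb, Ne.symm hy]
    · simp
  · intro y _ hy
    refine Finset.sum_eq_zero fun g _ => ?_
    split_ifs
    · rfl
    · simp [chainTrajProb, Fin.consEquiv, hy]
  · simp

lemma sum_range_shift (a : ℕ → ℝ) (M : ℝ) (N : ℕ) :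
    ∑ t ∈ Finset.range (N + 1), a t + M * a (N + 1)
      = a 0 + (∑ t ∈ Finset.range N, a (t + 1) + M * a (N + 1)) := by
  rw [Finset.sum_range_succ']
  ring

lemma RevChain.bellman (h : RevChain G P p) (A : Finset V) (Gf : Finset V → V → ℝ) (M : ℝ)
    (hM : ∀ S x, Gf S x ≤ M) (hM0 : 0 ≤ M) (hG0 : ∀ x, Gf ∅ x = 0)
    (hG : ∀ S : Finset V, S ⊆ A → S.Nonempty → ∀ x, x ∉ S →
      Gf S x ≤ 1 + ∑ y, P x y * Gf (S.erase y) y) :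
    ∀ N : ℕ, ∀ S : Finset V, S ⊆ A → ∀ x, x ∉ S →
      Gf S x ≤ ∑ t ∈ Finset.range N, uncS P S x t + M * uncS P S x N := by
  intro N
  induction N with
  | zero =>
    intro S hSA x hx
    rcases S.eq_empty_or_nonempty with rfl | hS
    · rw [hG0]
      have := uncS_nonneg h.nonneg ∅ x 0
      simp only [Finset.range_zero, Finset.sum_empty, zero_add]
      positivity
    · simp [uncS_zero S hS x hx, hM]
  | succ N ih =>
    intro S hSA x hx
    rcases S.eq_empty_or_nonempty with rfl | hS
    · rw [hG0]
      exact add_nonneg (Finset.sum_nonneg fun t _ => uncS_nonneg h.nonneg _ _ _)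
        (mul_nonneg hM0 (uncS_nonneg h.nonneg _ _ _))
    · rw [sum_range_shift, uncS_zero S hS x hx]
      refine (hG S hSA hS x hx).trans ?_
      simp only [uncS_succ S x hx]
      rw [Finset.sum_comm, Finset.mul_sum, ← Finset.sum_add_distrib]
      gcongr with y _
      rw [← Finset.mul_sum, mul_left_comm, ← mul_add]
      exact mul_le_mul_of_nonneg_left
        (ih _ ((Finset.erase_subset _ _).trans hSA) y (by simp)) (h.nonneg _ _)

lemma RevChain.main (h : RevChain G P p) :
    ∃ u : V,
      ENNReal.ofReal (((Fintype.card V : ℝ) / 4) * Real.log ((Fintype.card V : ℝ) / 2)) ≤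
        chainCoverTime P u := by
  haveI : Nonempty V := h.conn.nonempty
  set n : ℝ := (Fintype.card V : ℝ) with hn
  have hnpos : 0 < n := by rw [hn]; exact_mod_cast Fintype.card_pos
  obtain ⟨H, φ, hH0, hH1, hH2⟩ := h.hitting
  obtain ⟨F, hF0, hF1, hF2⟩ := h.exists_family (fun x => - φ x / 2)
  set A : Finset V := Finset.univ.filter (fun y => p y ≤ 2 / n) with hA
  have hAcard : n / 2 ≤ (A.card : ℝ) := by
    have h1 : (Finset.univ.filter (fun y => ¬ p y ≤ 2 / n)).card • (2 / n) ≤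
        ∑ y ∈ Finset.univ.filter (fun y => ¬ p y ≤ 2 / n), p y :=
      Finset.card_nsmul_le_sum _ _ _ (fun y hy => by
        have := (Finset.mem_filter.1 hy).2
        linarith)
    have h2 : ∑ y ∈ Finset.univ.filter (fun y => ¬ p y ≤ 2 / n), p y ≤ ∑ y, p y :=
      Finset.sum_le_sum_of_subset_of_nonneg (Finset.filter_subset _ _)
        (fun y _ _ => (h.p_pos y).le)
    have h3 : A.card + (Finset.univ.filter (fun y => ¬ p y ≤ 2 / n)).card = Fintype.card V :=
      Finset.card_filter_add_card_filter_not _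
    have h3' : (A.card : ℝ) + ((Finset.univ.filter (fun y => ¬ p y ≤ 2 / n)).card : ℝ) = n := by
      rw [← Nat.cast_add, h3]
    rw [h.p_sum] at h2
    rw [nsmul_eq_mul] at h1
    have h4 := h1.trans h2
    rw [mul_div_assoc', div_le_one hnpos] at h4
    linarith
  have hAne : A.Nonempty := by
    rw [← Finset.card_pos]
    have : (0 : ℝ) < A.card := by linarith
    exact_mod_cast this
  obtain ⟨u, huA, hu⟩ := A.exists_min_image φ hAne
  refine ⟨u, ?_⟩
  have hK : ∀ x, ∀ y ∈ A, x ≠ y → n / 4 ≤ H x y + φ x / 2 - φ y / 2 := by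
    intro x y hy hxy
    refine le_trans ?_ (hH2 x y hxy)
    have h1 : p y ≤ 2 / n := (Finset.mem_filter.1 hy).2
    have hp := h.p_pos y
    rw [le_div_iff₀ hnpos] at h1
    rw [le_div_iff₀ (by positivity)]
    linarith
  have hrem := h.removal A (n / 4) φ H hH0 hH1 hK F hF0 hF1 hF2
  have hlow := RevChain.family_lower F A (n / 4) φ hF0 hrem (A.erase u).card (A.erase u) rfl
    (Finset.erase_subset _ _) u (by simp)
  let Gf : Finset V → V → ℝ := fun S x => if S = ∅ then 0 else F S x + φ u / 2
  obtain ⟨M, hM0, hM⟩ : ∃ M : ℝ, 0 ≤ M ∧ ∀ S x, Gf S x ≤ M := by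
    refine ⟨∑ q : Finset V × V, |Gf q.1 q.2|, Finset.sum_nonneg fun _ _ => abs_nonneg _, ?_⟩
    intro S x
    exact (le_abs_self _).trans (Finset.single_le_sum (f := fun q : Finset V × V => |Gf q.1 q.2|)
      (fun _ _ => abs_nonneg _) (Finset.mem_univ (S, x)))
  have hbell := h.bellman A Gf M hM hM0 (by simp [Gf]) (by
    intro S hSA hS x hx
    have h0 : Gf S x = F S x + φ u / 2 := by simp [Gf, hS.ne_empty]
    have h1 : ∑ y, P x y * (F S y + φ u / 2) ≤ ∑ y, P x y * Gf (S.erase y) y := by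
      refine Finset.sum_le_sum fun y _ => mul_le_mul_of_nonneg_left ?_ (h.nonneg _ _)
      by_cases hy : y ∈ S
      · rw [hF1 S y hy]
        by_cases he : S.erase y = ∅
        · simp only [he, Gf, if_true, hF0]
          linarith [hu y (hSA hy)]
        · simp [Gf, he]
      · rw [Finset.erase_eq_of_notMem hy]
        simp [Gf, hS.ne_empty]
    rw [h0, hF2 S hS x hx]
    simp only [mul_add, Finset.sum_add_distrib, ← Finset.sum_mul, h.row, one_mul] at h1
    linarith)
  have hGlow : n / 4 * Real.log (n / 2) ≤ Gf (A.erase u) u := by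
    have hc : ((A.erase u).card : ℝ) + 1 = A.card := by
      rw [Finset.cast_card_erase_of_mem huA]; ring
    have hlog : Real.log (n / 2) ≤ (harmonic (A.erase u).card : ℝ) := by
      refine le_trans ?_ (log_add_one_le_harmonic _)
      apply Real.log_le_log (by positivity)
      push_cast
      linarith
    have h1 : n / 4 * Real.log (n / 2) ≤ n / 4 * (harmonic (A.erase u).card : ℝ) :=
      mul_le_mul_of_nonneg_left hlog (by positivity)
    by_cases he : A.erase u = ∅
    · simp only [Gf, he, if_true]
      rw [he] at h1
      simpa using h1
    · simp only [Gf, he, if_false]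
      linarith
  have hunc : ∀ t, 0 ≤ chainUncov P u t := fun t =>
    (uncS_nonneg h.nonneg ∅ u t).trans (uncS_le h.nonneg ∅ u t)
  have hN : ∀ N, ENNReal.ofReal (n / 4 * Real.log (n / 2)) ≤
      chainCoverTime P u + ENNReal.ofReal M * ENNReal.ofReal (chainUncov P u N) := by
    intro N
    have h1 := hbell N (A.erase u) (Finset.erase_subset _ _) u (by simp)
    have h2 : n / 4 * Real.log (n / 2) ≤
        ∑ t ∈ Finset.range N, chainUncov P u t + M * chainUncov P u N := by
      refine hGlow.trans (h1.trans ?_)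
      gcongr with t _
      · exact uncS_le h.nonneg _ _ _
      · exact uncS_le h.nonneg _ _ _
    refine (ENNReal.ofReal_le_ofReal h2).trans (ENNReal.ofReal_add_le.trans ?_)
    rw [ENNReal.ofReal_mul hM0, ENNReal.ofReal_sum_of_nonneg (fun t _ => hunc t)]
    gcongr
    exact ENNReal.sum_le_tsum _
  by_cases htop : chainCoverTime P u = ⊤
  · rw [htop]; exact le_top
  · have h0 : Filter.Tendsto (fun N => ENNReal.ofReal (chainUncov P u N)) Filter.atTop (nhds 0) :=
      ENNReal.tendsto_atTop_zero_of_tsum_ne_top htop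
    have h1 : Filter.Tendsto (fun N => chainCoverTime P u +
        ENNReal.ofReal M * ENNReal.ofReal (chainUncov P u N)) Filter.atTop
        (nhds (chainCoverTime P u + ENNReal.ofReal M * 0)) :=
      tendsto_const_nhds.add (ENNReal.Tendsto.const_mul h0 (Or.inr ENNReal.ofReal_ne_top))
    rw [mul_zero, add_zero] at h1
    exact ge_of_tendsto' h1 hN

end Helpers

/-- Let `G` be a connected graph on `n` vertices and consider any weighted
random walk on `G` (with positive edge weights `w`, moving from `u` to a neighbour `v` with
probability `w(u,v)/w(u)`). Then its vertex cover time satisfies `C_G ≥ (n/4)·log(n/2)`. -/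
theorem stmt10 {V : Type*} [Fintype V] [DecidableEq V] (G : SimpleGraph V)
    [DecidableRel G.Adj] (hconn : G.Connected)
    (w : Sym2 V → ℝ) (hw : ∀ e ∈ G.edgeSet, 0 < w e) :
    ∃ u : V,
      ENNReal.ofReal (((Fintype.card V : ℝ) / 4) * Real.log ((Fintype.card V : ℝ) / 2)) ≤
        chainCoverTime
          (fun a b => if G.Adj a b then w s(a, b) / (∑ x ∈ G.neighborFinset a, w s(a, x))
            else 0) u := by
  haveI : Nonempty V := hconn.nonempty
  by_cases hcard : Fintype.card V = 1
  · refine ⟨Classical.arbitrary V, ?_⟩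
    rw [ENNReal.ofReal_of_nonpos]
    · exact zero_le
    · rw [hcard]
      have : Real.log (((1 : ℕ) : ℝ) / 2) ≤ 0 := Real.log_nonpos (by norm_num) (by norm_num)
      exact mul_nonpos_of_nonneg_of_nonpos (by norm_num) this
  haveI : Nontrivial V := by
    rw [← Fintype.one_lt_card_iff_nontrivial]
    have : 0 < Fintype.card V := Fintype.card_pos
    omega
  have hwadj : ∀ a b, G.Adj a b → 0 < w s(a, b) := fun a b hab => hw _ (by simpa using hab)
  set d : V → ℝ := fun a => ∑ x ∈ G.neighborFinset a, w s(a, x) with hd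
  have hdpos : ∀ a, 0 < d a := by
    intro a
    obtain ⟨b, hb⟩ := hconn.preconnected.exists_adj_of_nontrivial a
    exact Finset.sum_pos (fun x hx => hwadj a x (by simpa using hx)) ⟨b, by simpa using hb⟩
  have hDpos : 0 < ∑ a, d a := Finset.sum_pos (fun a _ => hdpos a) Finset.univ_nonempty
  have hchain : RevChain G (fun a b => if G.Adj a b then w s(a, b) / d a else 0)
      (fun a => d a / ∑ x, d x) := by
    refine ⟨hconn, ?_, ?_, ?_, ?_, ?_, ?_⟩
    · intro a b
      split_ifs with hab
      · exact (div_pos (hwadj a b hab) (hdpos a)).le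
      · exact le_rfl
    · intro a b hab
      simp only [hab, if_true]
      exact div_pos (hwadj a b hab) (hdpos a)
    · intro a
      have h1 : ∑ b, (if G.Adj a b then w s(a, b) / d a else 0)
          = ∑ b ∈ G.neighborFinset a, w s(a, b) / d a := by
        rw [← Finset.sum_filter, SimpleGraph.neighborFinset_eq_filter]
      rw [h1, ← Finset.sum_div]
      exact div_self (hdpos a).ne'
    · exact fun a => div_pos (hdpos a) hDpos
    · rw [← Finset.sum_div]
      exact div_self hDpos.ne'
    · intro a b
      have ha := (hdpos a).ne'
      have hb := (hdpos b).ne'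
      by_cases hab : G.Adj a b
      · simp only [hab, hab.symm, if_true]
        rw [Sym2.eq_swap (a := b)]
        field_simp
      · have hba : ¬ G.Adj b a := fun hc => hab hc.symm
        simp [hab, hba]
  exact hchain.main
end

section
/- Let G be a finite connected graph with n vertices, m edges, minimum degree δ ≥ 2 and maximum degree Δ, and let s be an integer with 1 ≤ s ≤ log n. Set t* = 14·(Δ+7)·m·log n/(δ·s·(1−λmax)). Then there is a constant c such that for every start vertex u, with probability at least 1 − c/n^3, the lazy simple random walk on G started at u visits, within t* steps, at least one vertex of every connected edge-induced subgraph of G having exactly s vertices. -/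
open scoped ENNReal Classical

-- `lambdaMax P` : the largest absolute value of an eigenvalue of `P` other than the
-- eigenvalue `1` (for an ergodic chain on a connected graph, `max(|λ₂|,…,|λₙ|)`).
noncomputable def lambdaMax {V : Type*} [Fintype V] [DecidableEq V] (P : Matrix V V ℝ) : ℝ :=
  sSup {x : ℝ | ∃ μ ∈ spectrum ℝ P, μ ≠ 1 ∧ x = |μ|}

-- Transition matrix of the lazy simple random walk on `G`.
noncomputable def lazyMatrix {V : Type*} [Fintype V] [DecidableEq V] (G : SimpleGraph V) :
    Matrix V V ℝ :=
  Matrix.of fun u v =>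
    (if u = v then (1 : ℝ) / 2 else 0) +
      (if G.Adj u v then 1 / (2 * ((G.neighborSet u).ncard : ℝ)) else 0)

-- `missProb P u 𝒮 t` : the probability that during steps `0, 1, …, t` the chain started at
-- `u` completely avoids at least one of the vertex sets in the family `𝒮`.
noncomputable def missProb {V : Type*} [Fintype V] (P : V → V → ℝ) (u : V)
    (𝒮 : Set (Set V)) (t : ℕ) : ℝ :=
  ∑ f : Fin (t + 1) → V,
    if ∃ U ∈ 𝒮, ∀ i, f i ∉ U then chainTrajProb P u f else 0

-- The vertex set of the edge-induced subgraph determined by a set `E'` of edges.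
def edgeVerts {V : Type*} (E' : Finset (Sym2 V)) : Set V := {x : V | ∃ e ∈ E', x ∈ e}

-- The family of vertex sets of connected edge-induced subgraphs of `G` with exactly `s`
-- vertices.
def connEdgeSubgraphVerts {V : Type*} [Fintype V] (G : SimpleGraph V) (s : ℕ) :
    Set (Set V) :=
  {U : Set V | ∃ E' : Finset (Sym2 V), (E' : Set (Sym2 V)) ⊆ G.edgeSet ∧ E'.Nonempty ∧
    U = edgeVerts E' ∧ U.ncard = s ∧
    ((SimpleGraph.fromEdgeSet (E' : Set (Sym2 V))).induce (edgeVerts E')).Connected}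

namespace S14

/-- Poincare-type inequality for a reversible kernel. -/
theorem poincare {V : Type} [Fintype V] [DecidableEq V] [Nonempty V] (d : V → ℝ) (hd : ∀ v, 0 < d v)
    (P : Matrix V V ℝ) (hrev : ∀ u v, d u * P u v = d v * P v u) (hsum : ∀ u, ∑ v, P u v = 1)
    (l : ℝ)
    (hl : ∀ (f : V → ℝ) (μ : ℝ), f ≠ 0 → ∑ v, d v * f v = 0 →
      (∀ u, ∑ v, P u v * f v = μ * f u) → μ ≤ l)
    (f : V → ℝ) :
    ∑ u, d u * f u * ∑ v, P u v * f v ≤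
      l * ∑ u, d u * f u ^ 2 + (1 - l) * (∑ u, d u * f u) ^ 2 / ∑ u, d u := by
  set D := ∑ u, d u with hD
  have hDpos : 0 < D := Finset.sum_pos (fun u _ => hd u) Finset.univ_nonempty
  set w : V → ℝ := fun u => Real.sqrt (d u) with hw
  have hwpos : ∀ u, 0 < w u := fun u => Real.sqrt_pos.2 (hd u)
  have hww : ∀ u, w u * w u = d u := fun u => Real.mul_self_sqrt (hd u).le
  let N : Matrix V V ℝ := Matrix.of fun u v =>
    (if u = v then l else 0) - w u * P u v / w v + (1 - l) * w u * w v / D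
  -- the action of N on `w * g`
  have hN : ∀ (g : V → ℝ) (u : V), N.mulVec (fun v => w v * g v) u =
      w u * (l * g u - ∑ v, P u v * g v + (1 - l) * (∑ v, d v * g v) / D) := by
    intro g u
    have h1 : N.mulVec (fun v => w v * g v) u =
        ∑ v, ((if u = v then l * (w u * g u) else 0) - w u * (P u v * g v)
          + w u * ((1 - l) / D) * (d v * g v)) := by
      simp only [Matrix.mulVec, dotProduct, N, Matrix.of_apply]
      refine Finset.sum_congr rfl fun v _ => ?_
      have := (hwpos v).ne'
      rw [← hww v]
      by_cases h : u = v
      · subst h; simp; field_simp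
      · simp [h]; field_simp
    rw [h1, Finset.sum_add_distrib, Finset.sum_sub_distrib, ← Finset.mul_sum, ← Finset.mul_sum]
    simp
    ring
  have hherm : N.IsHermitian := by
    ext u v
    simp only [Matrix.conjTranspose_apply, N, Matrix.of_apply, star_trivial]
    have h1 : w v * P v u / w u = w u * P u v / w v := by
      have := hrev u v
      rw [← hww u, ← hww v] at this
      have h1 := (hwpos u).ne'
      have h2 := (hwpos v).ne'
      field_simp
      nlinarith
    rw [h1]
    simp only [eq_comm (a := v) (b := u)]
    ring
  have hpsd : N.PosSemidef := by
    rw [hherm.posSemidef_iff_eigenvalues_nonneg]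
    intro j
    show 0 ≤ hherm.eigenvalues j
    set ν := hherm.eigenvalues j
    set x : V → ℝ := (hherm.eigenvectorBasis j).ofLp with hx
    have hx0 : x ≠ 0 := by
      intro h
      have h2 := hherm.eigenvectorBasis.orthonormal.1 j
      have : hherm.eigenvectorBasis j = 0 := by
        ext i; simpa using congrFun h i
      rw [this] at h2
      simp at h2
    have hev := hherm.mulVec_eigenvectorBasis j
    let g : V → ℝ := fun v => x v / w v
    have hxg : x = fun v => w v * g v := by
      ext v; simp only [g]; have := (hwpos v).ne'; field_simp
    have hev2 : ∀ u, l * g u - ∑ v, P u v * g v + (1 - l) * (∑ v, d v * g v) / D = ν * g u := by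
      intro u
      have h := congrFun hev u
      rw [← hx] at h
      rw [hxg, hN] at h
      simp only [Pi.smul_apply, smul_eq_mul] at h
      have h3 := (hwpos u).ne'
      apply mul_left_cancel₀ h3
      rw [h]; ring
    have hg0 : g ≠ 0 := by
      intro h; apply hx0; rw [hxg, h]; ext; simp
    set S := ∑ v, d v * g v with hS
    have hPS : ∑ u, d u * ∑ v, P u v * g v = S := by
      simp_rw [Finset.mul_sum]
      rw [Finset.sum_comm, hS]
      refine Finset.sum_congr rfl fun v _ => ?_
      have : ∀ u, d u * (P u v * g v) = d v * g v * P v u := by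
        intro u; rw [← mul_assoc, hrev]; ring
      simp_rw [this]
      rw [← Finset.mul_sum, hsum, mul_one]
    have hkey : ν * S = 0 := by
      have h1 : ∑ u, d u * (l * g u - ∑ v, P u v * g v + (1 - l) * S / D)
          = ∑ u, d u * (ν * g u) := Finset.sum_congr rfl fun u _ => by rw [hev2]
      have h2 : ∑ u, d u * (ν * g u) = ν * S := by
        rw [hS, Finset.mul_sum]; exact Finset.sum_congr rfl fun u _ => by ring
      have h3 : ∑ u, d u * (l * g u - ∑ v, P u v * g v + (1 - l) * S / D)
          = l * S - S + D * ((1 - l) * S / D) := by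
        simp_rw [mul_add, mul_sub]
        rw [Finset.sum_add_distrib, Finset.sum_sub_distrib, hPS, ← Finset.sum_mul, ← hD]
        congr 2
        rw [hS, Finset.mul_sum]; exact Finset.sum_congr rfl fun u _ => by ring
      rw [← h2, ← h1, h3]
      field_simp
      ring
    rcases mul_eq_zero.1 hkey with h | h
    · exact h.ge
    · have := hl g (l - ν) hg0 h (fun u => by
        have := hev2 u
        rw [h] at this
        simp at this
        linarith)
      linarith
  have h := hpsd.dotProduct_mulVec_nonneg (fun v => w v * f v)
  have h2 : star (fun v => w v * f v) ⬝ᵥ N.mulVec (fun v => w v * f v) =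
      l * ∑ u, d u * f u ^ 2 + (1 - l) * (∑ u, d u * f u) ^ 2 / D
        - ∑ u, d u * f u * ∑ v, P u v * f v := by
    simp only [dotProduct, star_trivial, hN, Pi.star_apply]
    have : ∀ u, w u * f u * (w u * (l * f u - ∑ v, P u v * f v + (1 - l) * (∑ v, d v * f v) / D))
        = l * (d u * f u ^ 2) - d u * f u * ∑ v, P u v * f v
          + d u * f u * ((1 - l) * (∑ v, d v * f v) / D) := by
      intro u; rw [← hww u]; ring
    simp_rw [this]
    rw [Finset.sum_add_distrib, Finset.sum_sub_distrib, ← Finset.mul_sum, ← Finset.sum_mul]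
    ring
  rw [h2] at h
  linarith

section graph

set_option linter.unusedSectionVars false

variable {V : Type} [Fintype V] [DecidableEq V] (G : SimpleGraph V) [DecidableRel G.Adj]

/-- Adjacency indicator. -/
noncomputable def cc (u v : V) : ℝ := if G.Adj u v then 1 else 0

/-- Degree as a real number. -/
noncomputable def dd (u : V) : ℝ := (G.degree u : ℝ)

theorem cc_nonneg (u v : V) : 0 ≤ cc G u v := by unfold cc; split_ifs <;> norm_num

theorem cc_symm (u v : V) : cc G u v = cc G v u := by simp [cc, G.adj_comm]

theorem sum_cc (u : V) : ∑ v, cc G u v = dd G u := by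
  simp only [cc, dd, Finset.sum_boole, ← G.card_neighborFinset_eq_degree]
  congr 2
  ext v; simp

theorem lazy_apply (u v : V) :
    lazyMatrix G u v = (if u = v then (1 : ℝ) / 2 else 0) + cc G u v / (2 * dd G u) := by
  have : (G.neighborSet u).ncard = G.degree u := by
    rw [Set.ncard_eq_toFinset_card', ← G.card_neighborFinset_eq_degree]; rfl
  simp only [lazyMatrix, Matrix.of_apply, cc, dd, this]
  split_ifs <;> simp_all

theorem lazy_nonneg (u v : V) : 0 ≤ lazyMatrix G u v := by
  rw [lazy_apply]
  have h1 := cc_nonneg G u v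
  have h2 : 0 ≤ dd G u := by unfold dd; positivity
  split_ifs <;> positivity

theorem lazy_mul (hd : ∀ v, 0 < dd G v) (g : V → ℝ) (u : V) :
    dd G u * ∑ v, lazyMatrix G u v * g v = dd G u * g u / 2 + (∑ v, cc G u v * g v) / 2 := by
  have h := (hd u).ne'
  have : ∀ v, lazyMatrix G u v * g v =
      (if u = v then g u / 2 else 0) + (cc G u v * g v) / (2 * dd G u) := by
    intro v; rw [lazy_apply]
    by_cases h : u = v
    · subst h; simp; ring
    · simp [h]; ring
  simp_rw [this]
  rw [Finset.sum_add_distrib, ← Finset.sum_div]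
  simp
  field_simp

theorem lazy_rev (hd : ∀ v, 0 < dd G v) (u v : V) :
    dd G u * lazyMatrix G u v = dd G v * lazyMatrix G v u := by
  rw [lazy_apply, lazy_apply, cc_symm G v u]
  have h1 := (hd u).ne'
  have h2 := (hd v).ne'
  by_cases h : u = v
  · subst h; rfl
  · simp [h, Ne.symm h]; field_simp

theorem lazy_sum (hd : ∀ v, 0 < dd G v) (u : V) : ∑ v, lazyMatrix G u v = 1 := by
  have h := lazy_mul G hd (fun _ => 1) u
  simp only [mul_one, sum_cc] at h
  have h1 := (hd u).ne'
  apply mul_left_cancel₀ h1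
  rw [h]; ring

theorem form_aux (f g : V → ℝ) (ε : ℝ) (hε : ε ^ 2 = 1) :
    ∑ u, ∑ v, cc G u v * ((f u + ε * f v) * (g u + ε * g v)) =
    2 * ∑ u, dd G u * f u * g u + 2 * ε * ∑ u, f u * ∑ v, cc G u v * g v := by
  have e1 : ∑ u, ∑ v, cc G u v * (f u * g u) = ∑ u, dd G u * f u * g u := by
    refine Finset.sum_congr rfl fun u _ => ?_
    rw [← Finset.sum_mul, sum_cc]; ring
  have e2 : ∑ u, ∑ v, cc G u v * (f v * g v) = ∑ u, dd G u * f u * g u := by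
    rw [← e1, Finset.sum_comm]
    refine Finset.sum_congr rfl fun u _ => Finset.sum_congr rfl fun v _ => ?_
    rw [cc_symm G]
  have e3 : ∑ u, ∑ v, cc G u v * (f u * g v) = ∑ u, f u * ∑ v, cc G u v * g v := by
    refine Finset.sum_congr rfl fun u _ => ?_
    rw [Finset.mul_sum]; refine Finset.sum_congr rfl fun v _ => by ring
  have e4 : ∑ u, ∑ v, cc G u v * (f v * g u) = ∑ u, f u * ∑ v, cc G u v * g v := by
    rw [← e3, Finset.sum_comm]
    refine Finset.sum_congr rfl fun u _ => Finset.sum_congr rfl fun v _ => ?_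
    rw [cc_symm G]
  have : ∀ u v, cc G u v * ((f u + ε * f v) * (g u + ε * g v)) =
      cc G u v * (f u * g u) + ε ^ 2 * (cc G u v * (f v * g v)) + ε * (cc G u v * (f u * g v))
        + ε * (cc G u v * (f v * g u)) := by intro u v; ring
  simp_rw [this, Finset.sum_add_distrib, ← Finset.mul_sum, e1, e2, e3, e4, hε]
  ring

/-- `⟨f, P g⟩` as a sum over edges. -/
theorem form_eq (hd : ∀ v, 0 < dd G v) (f g : V → ℝ) :
    ∑ u, dd G u * f u * ∑ v, lazyMatrix G u v * g v =
      (∑ u, ∑ v, cc G u v * ((f u + f v) * (g u + g v))) / 4 := by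
  have h := form_aux G f g 1 (by norm_num)
  simp only [one_mul] at h
  rw [h]
  have : ∀ u, dd G u * f u * ∑ v, lazyMatrix G u v * g v =
      (dd G u * f u * g u) / 2 + (f u * ∑ v, cc G u v * g v) / 2 := by
    intro u
    rw [mul_comm (dd G u), mul_assoc, lazy_mul G hd]; ring
  simp_rw [this, Finset.sum_add_distrib, ← Finset.sum_div]
  ring

theorem form_sub (hd : ∀ v, 0 < dd G v) (f : V → ℝ) :
    ∑ u, dd G u * f u ^ 2 - ∑ u, dd G u * f u * ∑ v, lazyMatrix G u v * f v =
      (∑ u, ∑ v, cc G u v * (f u - f v) ^ 2) / 4 := by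
  have h := form_aux G f f (-1) (by norm_num)
  have h2 := form_aux G f f 1 (by norm_num)
  have h3 := form_eq G hd f f
  simp only [one_mul] at h2
  rw [h3, h2]
  have : ∀ u v, cc G u v * (f u - f v) ^ 2 =
    cc G u v * ((f u + -1 * f v) * (f u + -1 * f v)) := by intro u v; ring
  simp_rw [this]
  rw [h]
  have : ∀ u, dd G u * f u ^ 2 = dd G u * f u * f u := by intro u; ring
  simp_rw [this]
  ring

theorem form_nonneg (hd : ∀ v, 0 < dd G v) (f : V → ℝ) :
    0 ≤ ∑ u, dd G u * f u * ∑ v, lazyMatrix G u v * f v := by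
  rw [form_eq G hd]
  refine div_nonneg (Finset.sum_nonneg fun u _ => Finset.sum_nonneg fun v _ =>
    mul_nonneg (cc_nonneg G u v) (mul_self_nonneg _)) (by norm_num)

theorem form_cs (hd : ∀ v, 0 < dd G v) (f g : V → ℝ) :
    (∑ u, dd G u * f u * ∑ v, lazyMatrix G u v * g v) ^ 2 ≤
      (∑ u, dd G u * f u * ∑ v, lazyMatrix G u v * f v) *
      (∑ u, dd G u * g u * ∑ v, lazyMatrix G u v * g v) := by
  rw [form_eq G hd, form_eq G hd, form_eq G hd]
  simp_rw [← Finset.sum_product']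
  have h := Finset.sum_mul_sq_le_sq_mul_sq (Finset.univ ×ˢ Finset.univ : Finset (V × V))
    (fun x => cc G x.1 x.2 * (f x.1 + f x.2)) (fun x => cc G x.1 x.2 * (g x.1 + g x.2))
  have hc : ∀ u v, cc G u v * cc G u v = cc G u v := by
    intro u v; unfold cc; split_ifs <;> simp
  have e : ∀ (p q : V → ℝ) (x : V × V), (cc G x.1 x.2 * (p x.1 + p x.2)) *
      (cc G x.1 x.2 * (q x.1 + q x.2)) = cc G x.1 x.2 * ((p x.1 + p x.2) * (q x.1 + q x.2)) := by
    intro p q x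
    rw [mul_mul_mul_comm, hc]
  simp_rw [sq (cc G _ _ * _), e] at h
  nlinarith [h]

theorem const_of_form (hG : G.Connected) (f : V → ℝ)
    (h : ∑ u, ∑ v, cc G u v * (f u - f v) ^ 2 = 0) (a b : V) : f a = f b := by
  have hadj : ∀ u v, G.Adj u v → f u = f v := by
    intro u v huv
    have h1 := (Finset.sum_eq_zero_iff_of_nonneg (fun u _ => Finset.sum_nonneg fun v _ =>
      mul_nonneg (cc_nonneg G u v) (sq_nonneg _))).1 h u (Finset.mem_univ _)
    have h2 := (Finset.sum_eq_zero_iff_of_nonneg (fun v _ =>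
      mul_nonneg (cc_nonneg G u v) (sq_nonneg _))).1 h1 v (Finset.mem_univ _)
    simp [cc, huv] at h2
    linarith
  obtain ⟨p⟩ := hG.preconnected a b
  induction p with
  | nil => rfl
  | cons h p ih => exact (hadj _ _ h).trans ih

theorem eigen_bounds (hd : ∀ v, 0 < dd G v) (f : V → ℝ) (hf : f ≠ 0) (μ : ℝ)
    (h : ∀ u, ∑ v, lazyMatrix G u v * f v = μ * f u) : 0 ≤ μ ∧ μ ≤ 1 := by
  have hpos : 0 < ∑ u, dd G u * f u ^ 2 := by
    obtain ⟨v, hv⟩ := Function.ne_iff.1 hf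
    refine Finset.sum_pos' (fun u _ => mul_nonneg (hd u).le (sq_nonneg _))
      ⟨v, Finset.mem_univ _, mul_pos (hd v) ?_⟩
    have : f v ≠ 0 := hv
    positivity
  have h1 := form_nonneg G hd f
  have h2 := form_sub G hd f
  have h3 : 0 ≤ (∑ u, ∑ v, cc G u v * (f u - f v) ^ 2) / 4 :=
    div_nonneg (Finset.sum_nonneg fun u _ => Finset.sum_nonneg fun v _ =>
      mul_nonneg (cc_nonneg G u v) (sq_nonneg _)) (by norm_num)
  have h4 : ∑ u, dd G u * f u * ∑ v, lazyMatrix G u v * f v = μ * ∑ u, dd G u * f u ^ 2 := by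
    rw [Finset.mul_sum]
    refine Finset.sum_congr rfl fun u _ => ?_
    rw [h]; ring
  rw [h4] at h1 h2
  constructor
  · by_contra hc; nlinarith
  · by_contra hc; nlinarith

theorem mem_spec_iff (P : Matrix V V ℝ) (μ : ℝ) :
    μ ∈ spectrum ℝ P ↔ ∃ f : V → ℝ, f ≠ 0 ∧ ∀ u, ∑ v, P u v * f v = μ * f u := by
  rw [← Matrix.spectrum_toLin', ← Module.End.hasEigenvalue_iff_mem_spectrum]
  constructor
  · intro h
    obtain ⟨f, hf⟩ := h.exists_hasEigenvector
    refine ⟨f, hf.2, fun u => ?_⟩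
    have := congrFun hf.apply_eq_smul u
    simpa [Matrix.mulVec, dotProduct] using this
  · rintro ⟨f, hf, h⟩
    refine Module.End.hasEigenvalue_of_hasEigenvector (x := f) ⟨?_, hf⟩
    rw [Module.End.mem_eigenspace_iff]
    ext u
    simpa [Matrix.mulVec, dotProduct] using h u

theorem spec_set_finite (P : Matrix V V ℝ) :
    {x : ℝ | ∃ μ ∈ spectrum ℝ P, μ ≠ 1 ∧ x = |μ|}.Finite := by
  refine ((Matrix.finite_real_spectrum (A := P)).image (fun μ => |μ|)).subset ?_
  rintro x ⟨μ, h, _, rfl⟩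
  exact ⟨μ, h, rfl⟩

theorem lambdaMax_lt_one (hd : ∀ v, 0 < dd G v) : lambdaMax (lazyMatrix G) < 1 := by
  unfold lambdaMax
  rcases Set.eq_empty_or_nonempty
    {x : ℝ | ∃ μ ∈ spectrum ℝ (lazyMatrix G), μ ≠ 1 ∧ x = |μ|} with h | h
  · rw [h, Real.sSup_empty]; norm_num
  · obtain ⟨μ, h1, h2, h3⟩ := h.csSup_mem (spec_set_finite _)
    rw [h3]
    obtain ⟨f, hf, he⟩ := (mem_spec_iff _ _).1 h1
    have := eigen_bounds G hd f hf μ he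
    rw [abs_of_nonneg this.1]
    exact lt_of_le_of_ne this.2 h2

theorem lazy_poincare (hG : G.Connected) (hd : ∀ v, 0 < dd G v) (f : V → ℝ) :
    ∑ u, dd G u * f u * ∑ v, lazyMatrix G u v * f v ≤
      lambdaMax (lazyMatrix G) * ∑ u, dd G u * f u ^ 2 +
      (1 - lambdaMax (lazyMatrix G)) * (∑ u, dd G u * f u) ^ 2 / ∑ u, dd G u := by
  have := hG.nonempty
  refine poincare (dd G) hd _ (lazy_rev G hd) (lazy_sum G hd) _ ?_ f
  intro f μ hf hS he
  have hμ : μ ≠ 1 := by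
    rintro rfl
    have h2 := form_sub G hd f
    have h3 : ∑ u, ∑ v, cc G u v * (f u - f v) ^ 2 = 0 := by
      have : ∑ u, dd G u * f u * ∑ v, lazyMatrix G u v * f v = ∑ u, dd G u * f u ^ 2 := by
        refine Finset.sum_congr rfl fun u _ => ?_
        rw [he]; ring
      rw [this] at h2
      linarith
    have hc := const_of_form G hG f h3
    apply hf
    ext a
    have : ∑ v, dd G v * f v = (∑ v, dd G v) * f a := by
      rw [Finset.sum_mul]
      exact Finset.sum_congr rfl fun v _ => by rw [hc v a]
    rw [this] at hS
    rcases mul_eq_zero.1 hS with h | h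
    · exact absurd h (Finset.sum_pos (fun u _ => hd u) Finset.univ_nonempty).ne'
    · exact h
  refine (le_abs_self μ).trans ?_
  exact le_csSup (spec_set_finite _).bddAbove ⟨μ, (mem_spec_iff _ _).2 ⟨f, hf, he⟩, hμ, rfl⟩

/-- Probability of avoiding `T` during steps `0..t`, as a function of the start. -/
noncomputable def av (P : V → V → ℝ) (T : Finset V) : ℕ → V → ℝ
  | 0, a => if a ∈ T then 0 else 1
  | t + 1, a => if a ∈ T then 0 else ∑ b, P a b * av P T t b

theorem chain_cons (P : V → V → ℝ) (u a : V) (t : ℕ) (g : Fin (t + 1) → V) :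
    chainTrajProb P u (Fin.cons a g : Fin (t + 2) → V) =
      ∑ b, (if a = u then P u b else 0) * chainTrajProb P b g := by
  unfold chainTrajProb
  rw [Fin.prod_univ_succ]
  rw [Finset.sum_eq_single (g 0)]
  · simp only [Fin.cons_zero, Fin.castSucc_zero, Fin.cons_succ, ← Fin.succ_castSucc]
    by_cases h : a = u
    · subst h; simp
    · simp [h]
  · intro b _ hb
    rw [if_neg (Ne.symm hb)]; simp
  · simp

theorem traj_sum (P : V → V → ℝ) (T : Finset V) (t : ℕ) : ∀ u,
    ∑ f : Fin (t + 1) → V, (if ∀ i, f i ∉ T then chainTrajProb P u f else 0) = av P T t u := by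
  induction t with
  | zero =>
    intro u
    rw [← (Equiv.funUnique (Fin 1) V).symm.sum_comp]
    simp [chainTrajProb, av]
    rw [Finset.sum_eq_single u]
    · by_cases h : u ∈ T <;> simp [h]
    · intro b _ hb; simp [hb]
    · simp
  | succ t ih =>
    intro u
    rw [← (Fin.consEquiv (fun _ : Fin (t + 2) => V)).sum_comp, Fintype.sum_prod_type]
    have e : ∀ (a : V) (g : Fin (t + 1) → V),
        (if ∀ i, (Fin.consEquiv (fun _ : Fin (t + 2) => V)) (a, g) i ∉ T then
          chainTrajProb P u ((Fin.consEquiv (fun _ : Fin (t + 2) => V)) (a, g)) else 0) =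
        if a = u then (if u ∈ T then 0 else
          ∑ b, P u b * (if ∀ i, g i ∉ T then chainTrajProb P b g else 0)) else 0 := by
      intro a g
      have h1 : (Fin.consEquiv (fun _ : Fin (t + 2) => V)) (a, g) =
        (Fin.cons a g : Fin (t + 2) → V) := rfl
      rw [h1, chain_cons]
      have h2 : (∀ i, (Fin.cons a g : Fin (t + 2) → V) i ∉ T) ↔ a ∉ T ∧ ∀ i, g i ∉ T := by
        rw [Fin.forall_fin_succ]; simp
      simp only [h2]
      by_cases ha : a = u
      · subst ha
        by_cases hT : a ∈ T
        · simp [hT]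
        · by_cases hg : ∀ i, g i ∉ T
          · simp [hT, hg]
          · simp [hT, hg]
      · simp [ha]
    simp_rw [e]
    rw [Finset.sum_eq_single u]
    · simp only [if_true, av]
      by_cases hT : u ∈ T
      · simp [hT]
      · simp only [hT, if_false]
        rw [Finset.sum_comm]
        simp_rw [← ih, Finset.mul_sum]
    · intro b _ hb; simp [hb]
    · simp

theorem av_supp (P : V → V → ℝ) (T : Finset V) (t : ℕ) (a : V) (ha : a ∈ T) : av P T t a = 0 := by
  cases t <;> simp [av, ha]

theorem form_supp (hG : G.Connected) (hd : ∀ v, 0 < dd G v) (T : Finset V) (f : V → ℝ)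
    (hf : ∀ a ∈ T, f a = 0) :
    ∑ u, dd G u * f u * ∑ v, lazyMatrix G u v * f v ≤
      Real.exp (-((1 - lambdaMax (lazyMatrix G)) * ((∑ v ∈ T, dd G v) / ∑ v, dd G v))) *
        ∑ u, dd G u * f u ^ 2 := by
  have := hG.nonempty
  set l := lambdaMax (lazyMatrix G)
  have hl : l < 1 := lambdaMax_lt_one G hd
  have hp := lazy_poincare G hG hd f
  set D := ∑ v, dd G v with hD
  have hDpos : 0 < D := Finset.sum_pos (fun u _ => hd u) Finset.univ_nonempty
  set E := ∑ v ∈ T, dd G v with hE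
  set A := ∑ u, dd G u * f u ^ 2 with hA
  have hA0 : 0 ≤ A := Finset.sum_nonneg fun u _ => mul_nonneg (hd u).le (sq_nonneg _)
  have hcs : (∑ u, dd G u * f u) ^ 2 ≤ (D - E) * A := by
    have e1 : D - E = ∑ u ∈ Tᶜ, dd G u := by
      rw [hD, hE, ← Finset.sum_add_sum_compl T]; ring
    have e2 : ∑ u, dd G u * f u = ∑ u ∈ Tᶜ, dd G u * f u := by
      rw [← Finset.sum_add_sum_compl T, Finset.sum_eq_zero, zero_add]
      intro u hu; rw [hf u hu, mul_zero]
    have e3 : A = ∑ u ∈ Tᶜ, dd G u * f u ^ 2 := by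
      rw [hA, ← Finset.sum_add_sum_compl T, Finset.sum_eq_zero, zero_add]
      intro u hu; rw [hf u hu]; ring
    rw [e1, e2, e3]
    have h := Finset.sum_mul_sq_le_sq_mul_sq (Tᶜ) (fun u => Real.sqrt (dd G u))
      (fun u => Real.sqrt (dd G u) * f u)
    have hs : ∀ u, Real.sqrt (dd G u) ^ 2 = dd G u := fun u => Real.sq_sqrt (hd u).le
    simp_rw [mul_pow, hs, ← mul_assoc, ← sq, hs] at h
    exact h
  have h1 : (1 - l) * (∑ u, dd G u * f u) ^ 2 / D ≤ (1 - l) * ((1 - E / D) * A) := by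
    rw [mul_div_assoc]
    refine mul_le_mul_of_nonneg_left ?_ (by linarith)
    rw [div_le_iff₀ hDpos]
    calc _ ≤ _ := hcs
      _ = _ := by field_simp
  have h2 := Real.add_one_le_exp (-((1 - l) * (E / D)))
  have h3 := mul_le_mul_of_nonneg_right h2 hA0
  nlinarith

theorem av_norm (hG : G.Connected) (hd : ∀ v, 0 < dd G v) (T : Finset V) (t : ℕ) :
    ∑ u, dd G u * av (fun a b => lazyMatrix G a b) T t u ^ 2 ≤
      (Real.exp (-((1 - lambdaMax (lazyMatrix G)) * ((∑ v ∈ T, dd G v) / ∑ v, dd G v))) ^ t) ^ 2 *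
        ∑ u, dd G u := by
  have hmain := form_supp G hG hd T
  set r := Real.exp (-((1 - lambdaMax (lazyMatrix G)) * ((∑ v ∈ T, dd G v) / ∑ v, dd G v)))
  have hr : 0 < r := Real.exp_pos _
  induction t with
  | zero =>
    simp only [av, pow_zero, one_pow, one_mul]
    refine Finset.sum_le_sum fun u _ => ?_
    have := (hd u).le
    split_ifs <;> simp [this]
  | succ t ih =>
    set g := av (fun a b => lazyMatrix G a b) T t with hg
    set k := av (fun a b => lazyMatrix G a b) T (t + 1) with hk
    have hcs := form_cs G hd k g
    have e : ∑ u, dd G u * k u * ∑ v, lazyMatrix G u v * g v = ∑ u, dd G u * k u ^ 2 := by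
      refine Finset.sum_congr rfl fun u _ => ?_
      by_cases hu : u ∈ T
      · have h0 : k u = 0 := av_supp _ T (t + 1) u hu
        rw [h0]; ring
      · have : k u = ∑ v, lazyMatrix G u v * g v := by rw [hk, hg]; simp [av, hu]
        rw [← this]; ring
    rw [e] at hcs
    have h1 := hmain k (fun a ha => av_supp _ T (t + 1) a ha)
    have h2 := hmain g (fun a ha => av_supp _ T t a ha)
    set A := ∑ u, dd G u * k u ^ 2
    set B := ∑ u, dd G u * g u ^ 2
    have hA0 : 0 ≤ A := Finset.sum_nonneg fun u _ => mul_nonneg (hd u).le (sq_nonneg _)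
    have hB0 : 0 ≤ B := Finset.sum_nonneg fun u _ => mul_nonneg (hd u).le (sq_nonneg _)
    have h3 : A ^ 2 ≤ (r * A) * (r * B) :=
      hcs.trans (mul_le_mul h1 h2 (form_nonneg G hd g) (by positivity))
    have h4 : A ≤ r ^ 2 * B := by
      rcases hA0.eq_or_lt with h | h
      · rw [← h]; positivity
      · have : A * A ≤ A * (r ^ 2 * B) := by nlinarith
        exact le_of_mul_le_mul_left this h
    calc A ≤ r ^ 2 * B := h4
      _ ≤ r ^ 2 * ((r ^ t) ^ 2 * ∑ u, dd G u) := by gcongr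
      _ = _ := by ring

theorem av_bound (hG : G.Connected) (hd : ∀ v, 1 ≤ dd G v) (T : Finset V) (t : ℕ) (u : V) :
    av (fun a b => lazyMatrix G a b) T t u ≤
      Real.exp (-((1 - lambdaMax (lazyMatrix G)) * ((∑ v ∈ T, dd G v) / ∑ v, dd G v))) ^ t *
        Fintype.card V := by
  have hd' : ∀ v, 0 < dd G v := fun v => one_pos.trans_le (hd v)
  have h := av_norm G hG hd' T t
  refine le_of_sq_le_sq ?_ (by positivity)
  have h1 : dd G u * av (fun a b => lazyMatrix G a b) T t u ^ 2 ≤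
      ∑ u, dd G u * av (fun a b => lazyMatrix G a b) T t u ^ 2 :=
    Finset.single_le_sum (f := fun u => dd G u * av (fun a b => lazyMatrix G a b) T t u ^ 2)
      (fun u _ => mul_nonneg (hd' u).le (sq_nonneg _)) (Finset.mem_univ u)
  have h2 : ∑ u, dd G u ≤ (Fintype.card V : ℝ) ^ 2 := by
    have : ∀ v ∈ Finset.univ, dd G v ≤ (Fintype.card V : ℝ) := by
      intro v _
      unfold dd
      exact_mod_cast (G.degree_lt_card_verts v).le
    have := Finset.sum_le_card_nsmul _ _ _ this
    simpa [sq] using this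
  rw [mul_pow]
  calc _ ≤ dd G u * av (fun a b => lazyMatrix G a b) T t u ^ 2 :=
        le_mul_of_one_le_left (sq_nonneg _) (hd u)
    _ ≤ _ := h1.trans h
    _ ≤ _ := by gcongr

/-- Vertex sets of walks of length `k` starting at `v`. -/
noncomputable def cov : ℕ → V → Finset (Finset V)
  | 0, v => {{v}}
  | k + 1, v => (G.neighborFinset v).biUnion fun x => (cov k x).image (insert v)

theorem cov_card (k : ℕ) (v : V) : (cov G k v).card ≤ G.maxDegree ^ k := by
  induction k generalizing v with
  | zero => simp [cov]
  | succ k ih =>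
    rw [cov, pow_succ']
    refine (Finset.card_biUnion_le_card_mul _ _ (G.maxDegree ^ k) ?_).trans ?_
    · intro x _
      exact Finset.card_image_le.trans (ih x)
    · gcongr
      rw [G.card_neighborFinset_eq_degree]
      exact G.degree_le_maxDegree v

theorem cov_mem {a b : V} (p : G.Walk a b) : p.support.toFinset ∈ cov G p.length a := by
  induction p with
  | nil => simp [cov]
  | cons h p ih =>
    simp only [SimpleGraph.Walk.length_cons, cov, Finset.mem_biUnion, Finset.mem_image]
    exact ⟨_, by simpa using h, _, ih, by simp⟩

end graph

theorem grow {W : Type} [Fintype W] [DecidableEq W] (K : SimpleGraph W) (hK : K.Connected) (k : ℕ)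
    (hk : k + 1 ≤ Fintype.card W) :
    ∃ (a b : W) (p : K.Walk a b), p.length = 2 * k ∧ p.support.toFinset.card = k + 1 := by
  induction k with
  | zero =>
    obtain ⟨a⟩ := hK.nonempty
    exact ⟨a, a, .nil, by simp, by simp⟩
  | succ k ih =>
    obtain ⟨a, b, p, hl, hs⟩ := ih (by omega)
    have : ∃ y, y ∉ p.support.toFinset := by
      by_contra! hc
      have : p.support.toFinset = Finset.univ := by ext; simp [hc]
      rw [this, Finset.card_univ] at hs
      omega
    obtain ⟨y, hy⟩ := this
    obtain ⟨q⟩ := hK.preconnected a y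
    obtain ⟨e, _, h1, h2⟩ := q.exists_boundary_dart {x | x ∈ p.support} (by simp) (by simpa using hy)
    have had := e.adj
    set x := e.toProd.1
    set z := e.toProd.2
    simp only [Set.mem_ofPred_eq] at h1 h2
    refine ⟨a, b, (p.takeUntil x h1).append (.cons had (.cons had.symm (p.dropUntil x h1))), ?_, ?_⟩
    · have := congrArg SimpleGraph.Walk.length (p.take_spec h1)
      simp only [SimpleGraph.Walk.length_append, SimpleGraph.Walk.length_cons] at this ⊢
      omega
    · have : ((p.takeUntil x h1).append
          (.cons had (.cons had.symm (p.dropUntil x h1)))).support.toFinset =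
          insert z p.support.toFinset := by
        ext v
        conv_rhs => rw [← p.take_spec h1]
        have : x ∈ (p.dropUntil x h1).support := by simp
        simp only [List.mem_toFinset, SimpleGraph.Walk.mem_support_append_iff, Finset.mem_insert,
          SimpleGraph.Walk.support_cons, List.mem_cons]
        constructor
        · rintro (h | rfl | h | h) <;> tauto
        · tauto
      rw [this, Finset.card_insert_of_notMem (by simpa using h2), hs]

theorem fam_cov {V : Type} [Fintype V] [DecidableEq V] (G : SimpleGraph V) [DecidableRel G.Adj]
    (s : ℕ) (U : Set V) (hU : U ∈ connEdgeSubgraphVerts G s) :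
    ∃ T : Finset V, (T : Set V) = U ∧ T.card = s ∧ ∃ v, T ∈ cov G (2 * (s - 1)) v := by
  obtain ⟨E', hE, hne, rfl, hcard, hconn⟩ := hU
  set H := SimpleGraph.fromEdgeSet (E' : Set (Sym2 V))
  set U := edgeVerts E'
  have hc : Fintype.card U = s := by rw [← hcard, Set.ncard_eq_toFinset_card', Set.toFinset_card]
  have hne := hconn.nonempty
  have hpos : 0 < Fintype.card U := Fintype.card_pos
  obtain ⟨a, b, p, hl, hs⟩ := grow _ hconn (s - 1) (by omega)
  have hHG : H ≤ G := by
    intro x y hxy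
    exact hE ((SimpleGraph.fromEdgeSet_adj _).1 hxy).1
  let φ : H.induce U →g G :=
    (SimpleGraph.Hom.ofLE hHG).comp (SimpleGraph.Embedding.induce U).toHom
  have huniv : p.support.toFinset = Finset.univ := by
    rw [← Finset.card_eq_iff_eq_univ, hs]; omega
  have hm := cov_mem G (p.map φ)
  rw [SimpleGraph.Walk.length_map, hl] at hm
  have hset : ((p.map φ).support.toFinset : Set V) = U := by
    ext v
    simp only [SimpleGraph.Walk.support_map, List.coe_toFinset, Set.mem_ofPred_eq, List.mem_map]
    constructor
    · rintro ⟨x, _, rfl⟩; exact x.2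
    · intro hv
      refine ⟨⟨v, hv⟩, ?_, rfl⟩
      rw [← List.mem_toFinset, huniv]; simp
  refine ⟨_, hset, ?_, _, hm⟩
  rw [← hcard, ← Set.ncard_coe_finset]
  exact congrArg Set.ncard hset

theorem traj_nonneg {V : Type} [Fintype V] (P : V → V → ℝ) (hP : ∀ a b, 0 ≤ P a b) (u : V) {t : ℕ}
    (f : Fin (t + 1) → V) : 0 ≤ chainTrajProb P u f := by
  unfold chainTrajProb
  refine mul_nonneg (by split_ifs <;> norm_num) (Finset.prod_nonneg fun i _ => hP _ _)

theorem miss_le {V : Type} [Fintype V] [DecidableEq V] (P : V → V → ℝ) (hP : ∀ a b, 0 ≤ P a b)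
    (u : V) (S : Set (Set V)) (F : Finset (Finset V))
    (hF : ∀ U ∈ S, ∃ T ∈ F, (T : Set V) = U) (t : ℕ) :
    missProb P u S t ≤ ∑ T ∈ F, av P T t u := by
  unfold missProb
  simp_rw [← traj_sum]
  rw [Finset.sum_comm]
  refine Finset.sum_le_sum fun f _ => ?_
  have h0 := traj_nonneg P hP u f
  have hnn : ∀ T ∈ F, 0 ≤ (if ∀ i, f i ∉ T then chainTrajProb P u f else 0) := by
    intro T _; split_ifs <;> simp [h0]
  split_ifs with h
  · obtain ⟨U, hU, hf⟩ := h
    obtain ⟨T, hT, rfl⟩ := hF U hU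
    have h1 := Finset.single_le_sum hnn hT
    rw [if_pos (by simpa using hf)] at h1
    exact h1
  · exact Finset.sum_nonneg hnn

theorem arith_aux (Δ L m δ s k : ℝ) (hm : m ≠ 0) (hδ : δ ≠ 0) (hs : s ≠ 0) (hk : k ≠ 0) :
    7 * (Δ + 7) * L = 14 * (Δ + 7) * m * L / (δ * s * k) * (k * (δ * s / (2 * m))) := by
  field_simp
  ring

end S14


/-- There is a constant `c` such that: for every finite connected graph
`G` on `n` vertices and `m` edges, with minimum degree `δ ≥ 2` and maximum degree `Δ`, and
every integer `1 ≤ s ≤ log n`, setting `t* = 14·(Δ+7)·m·log n/(δ·s·(1 − λmax))`, for every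
start vertex `u`, with probability at least `1 − c/n³` the lazy simple random walk started
at `u` visits, within `t*` steps, at least one vertex of every connected edge-induced
subgraph of `G` having exactly `s` vertices. -/
theorem stmt14 :
    ∃ c : ℝ, 0 < c ∧
      ∀ (V : Type) [Fintype V] [DecidableEq V] (G : SimpleGraph V) [DecidableRel G.Adj],
        G.Connected → 2 ≤ G.minDegree →
        ∀ s : ℕ, 1 ≤ s → (s : ℝ) ≤ Real.log (Fintype.card V) →
        ∀ u : V,
          missProb (fun a b => lazyMatrix G a b) u (connEdgeSubgraphVerts G s)
              ⌈14 * ((G.maxDegree : ℝ) + 7) * (G.edgeFinset.card : ℝ) *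
                  Real.log (Fintype.card V) /
                ((G.minDegree : ℝ) * (s : ℝ) * (1 - lambdaMax (lazyMatrix G)))⌉₊ ≤
            c / (Fintype.card V : ℝ) ^ 3 := by
  refine ⟨1, one_pos, ?_⟩
  intro V _ _ G _ hG hmin s hs hsl u
  have hδ : ∀ v, (G.minDegree : ℝ) ≤ S14.dd G v := by
    intro v; unfold S14.dd; exact_mod_cast G.minDegree_le_degree v
  have hmin' : (2 : ℝ) ≤ G.minDegree := by exact_mod_cast hmin
  have hd1 : ∀ v, 1 ≤ S14.dd G v := fun v => by linarith [hδ v]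
  have hd0 : ∀ v, 0 < S14.dd G v := fun v => by linarith [hd1 v]
  have hne := hG.nonempty
  have hl := S14.lambdaMax_lt_one G hd0
  set l := lambdaMax (lazyMatrix G) with hldef
  set n := Fintype.card V with hn
  have hnpos : (0 : ℝ) < n := by exact_mod_cast Fintype.card_pos
  set L := Real.log n with hL
  have hnL : (n : ℝ) = Real.exp L := (Real.exp_log hnpos).symm
  have hs1 : (1 : ℝ) ≤ s := by exact_mod_cast hs
  have hL1 : 1 ≤ L := hs1.trans hsl
  have hsumd : ∑ v, S14.dd G v = 2 * (G.edgeFinset.card : ℝ) := by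
    unfold S14.dd
    exact_mod_cast G.sum_degrees_eq_twice_card_edges
  have hm : (0 : ℝ) < G.edgeFinset.card := by
    have := Finset.sum_pos (fun u _ => hd0 u) (Finset.univ_nonempty (α := V))
    rw [hsumd] at this; linarith
  set m : ℝ := (G.edgeFinset.card : ℝ) with hmdef
  set δ : ℝ := (G.minDegree : ℝ) with hδdef
  set Δ : ℝ := (G.maxDegree : ℝ) with hΔ
  have hΔ2 : 2 ≤ Δ := by
    have : δ ≤ Δ := by rw [hδdef, hΔ]; exact_mod_cast G.minDegree_le_maxDegree
    linarith
  set t := ⌈14 * (Δ + 7) * m * L / (δ * (s : ℝ) * (1 - l))⌉₊ with ht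
  have htle : 14 * (Δ + 7) * m * L / (δ * (s : ℝ) * (1 - l)) ≤ t := Nat.le_ceil _
  set F : Finset (Finset V) :=
    (Finset.univ.biUnion (fun v => S14.cov G (2 * (s - 1)) v)).filter (fun T => T.card = s) with hF
  have hmiss := S14.miss_le (fun a b => lazyMatrix G a b) (S14.lazy_nonneg G) u
    (connEdgeSubgraphVerts G s) F (by
      intro U hU
      obtain ⟨T, h1, h2, v, h3⟩ := S14.fam_cov G s U hU
      refine ⟨T, ?_, h1⟩
      rw [hF, Finset.mem_filter, Finset.mem_biUnion]
      exact ⟨⟨v, Finset.mem_univ _, h3⟩, h2⟩) t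
  refine hmiss.trans ?_
  have hcardN : F.card ≤ n * G.maxDegree ^ (2 * (s - 1)) := by
    refine (Finset.card_filter_le _ _).trans ?_
    exact Finset.card_biUnion_le_card_mul _ _ _ (fun v _ => S14.cov_card G _ v)
  have hcard : (F.card : ℝ) ≤ Real.exp (L + 2 * Δ * L) := by
    have h1 : (F.card : ℝ) ≤ n * Δ ^ (2 * (s - 1)) := by rw [hΔ]; exact_mod_cast hcardN
    have h2 : Δ ≤ Real.exp Δ := by linarith [Real.add_one_le_exp Δ]
    have h3 : Δ ^ (2 * (s - 1)) ≤ Real.exp (2 * Δ * L) := by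
      calc Δ ^ (2 * (s - 1)) ≤ Δ ^ (2 * s) := pow_le_pow_right₀ (by linarith) (by omega)
        _ ≤ Real.exp Δ ^ (2 * s) := pow_le_pow_left₀ (by linarith) h2 _
        _ = Real.exp (2 * Δ * s) := by
          rw [← Real.exp_nat_mul]; congr 1; push_cast; ring
        _ ≤ _ := Real.exp_le_exp.2 (mul_le_mul_of_nonneg_left hsl (by linarith))
    rw [Real.exp_add, ← hnL]
    exact h1.trans (mul_le_mul_of_nonneg_left h3 hnpos.le)
  have hav : ∀ T ∈ F, S14.av (fun a b => lazyMatrix G a b) T t u ≤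
      Real.exp (-(7 * (Δ + 7) * L) + L) := by
    intro T hT
    have hTs : T.card = s := (Finset.mem_filter.1 hT).2
    refine (S14.av_bound G hG hd1 T t u).trans ?_
    rw [← hn, Real.exp_add, ← hnL, ← Real.exp_nat_mul]
    refine mul_le_mul_of_nonneg_right (Real.exp_le_exp.2 ?_) hnpos.le
    rw [← hldef, hsumd, mul_neg, neg_le_neg_iff]
    have hT1 : δ * s ≤ ∑ v ∈ T, S14.dd G v := by
      have := Finset.card_nsmul_le_sum T (S14.dd G) δ (fun v _ => hδ v)
      rw [hTs, nsmul_eq_mul] at this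
      linarith
    have hl' : 0 < 1 - l := by linarith
    have hδ0 : 0 < δ := by linarith
    have hs0 : (0 : ℝ) < s := by linarith
    calc 7 * (Δ + 7) * L
        = 14 * (Δ + 7) * m * L / (δ * (s : ℝ) * (1 - l)) * ((1 - l) * (δ * s / (2 * m))) := by
          exact S14.arith_aux _ _ _ _ _ _ hm.ne' hδ0.ne' hs0.ne' hl'.ne'
      _ ≤ _ := mul_le_mul htle (mul_le_mul_of_nonneg_left
          (div_le_div_of_nonneg_right hT1 (mul_pos two_pos hm).le) hl'.le)
          (mul_nonneg hl'.le (div_nonneg (mul_pos hδ0 hs0).le (mul_pos two_pos hm).le))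
          (Nat.cast_nonneg _)
  calc ∑ T ∈ F, S14.av (fun a b => lazyMatrix G a b) T t u
      ≤ F.card • Real.exp (-(7 * (Δ + 7) * L) + L) := Finset.sum_le_card_nsmul _ _ _ hav
    _ ≤ Real.exp (L + 2 * Δ * L) * Real.exp (-(7 * (Δ + 7) * L) + L) := by
        rw [nsmul_eq_mul]; gcongr
    _ = Real.exp (L + 2 * Δ * L + (-(7 * (Δ + 7) * L) + L)) := (Real.exp_add _ _).symm
    _ ≤ Real.exp (-(3 * L)) := Real.exp_le_exp.2 (by nlinarith)
    _ = 1 / (n : ℝ) ^ 3 := by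
        rw [hnL, ← Real.exp_nat_mul, Real.exp_neg, one_div]; norm_num
end
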